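/- Let X be a proper geodesic metric space and p ∈ X. If 0 < inj(p) < conj(X), then inj(p) = MinRad(p). -/

import Mathlib

/-!
Let `f` be the exponential map at `p` restricted to the space of minimizing geodesics issuing in
`p`. By Arzelà–Ascoli `f` is proper, its multiple values are exactly the cut points of `p`, and it
is locally injective below the conjugate radius.

Hence `f⁻¹` is well defined and continuous off the cut locus. If `γ t₀` is a minimal cut point
which is neither a cut point nor beyond the conjugate radius, then for `t` near `t₀` the minimizing
geodesic to `γ t` is close to the initial segment of `γ` ending at `γ t`, so they coincide by local
injectivity and `γ` is minimizing beyond `t₀`, a contradiction. This gives `inj p ≤ minRad p`.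

Conversely, by compactness `inj p` is attained at a cut point `q`, the common end of two geodesics
`c ≠ d` of length `r`. If `dist (c t) (d t) = 2 r (1 - t)` for some `t < 1`, then `c` followed by
the reverse of `d` is a local geodesic, so `q` is a minimal cut point. Otherwise, for each `t < 1`,
a geodesic from `c t` to `d t` stays within distance `< r` of `p`, hence off the cut locus, and
`f⁻¹` maps it to a connected set joining the segments of `c` and `d` over `[0,t]`. The image of this
set under `f` shrinks to `q` as `t → 1`, whereas the two segments tend to `c` and `d`; this is
impossible because `f` is closed and injective near `c`.
-/

open Set Metric Topology Filter
open scoped ENNReal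

noncomputable section

namespace InjSoul

/-- The unit interval `[0,1] ⊆ ℝ`. -/
abbrev I01 : Set ℝ := Set.Icc (0 : ℝ) 1

variable {X : Type*} [MetricSpace X]

/-- `0` as a point of `[0,1]`. -/
def pt0 : I01 := ⟨0, by norm_num⟩

/-- `1` as a point of `[0,1]`. -/
def pt1 : I01 := ⟨1, by norm_num⟩

/-- `c : [0,1] → X` is a geodesic of speed (= length) `L`. -/
def IsGeod (c : C(I01, X)) (L : ℝ) : Prop :=
  0 ≤ L ∧ ∀ s t : I01, dist (c s) (c t) = L * |(s : ℝ) - (t : ℝ)|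

/-- `γ : [0,1] → X` is a local geodesic of speed (= length) `L`. -/
def IsLocGeod (γ : C(I01, X)) (L : ℝ) : Prop :=
  0 ≤ L ∧ ∀ t : I01, ∃ ε > 0, ∀ s s' : I01,
    |(s : ℝ) - (t : ℝ)| < ε → |(s' : ℝ) - (t : ℝ)| < ε →
      dist (γ s) (γ s') = L * |(s : ℝ) - (s' : ℝ)|

/-- `X` is a geodesic space: any two points are joined by a geodesic. -/
def GeodesicSpace (X : Type*) [MetricSpace X] : Prop :=
  ∀ x y : X, ∃ (c : C(I01, X)) (L : ℝ), IsGeod c L ∧ c pt0 = x ∧ c pt1 = y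

/-- The cut locus of `p`: all points joined to `p` by at least two distinct geodesics. -/
def Cut (p : X) : Set X :=
  {q | ∃ (γ σ : C(I01, X)) (Lγ Lσ : ℝ), IsGeod γ Lγ ∧ IsGeod σ Lσ ∧
    γ pt0 = p ∧ γ pt1 = q ∧ σ pt0 = p ∧ σ pt1 = q ∧ γ ≠ σ}

/-- The injectivity radius of `p`, an element of `[0,∞]` (`∞` if `Cut p = ∅`). -/
def inj (p : X) : ℝ≥0∞ := ⨅ q ∈ Cut p, edist p q

/-- The minimal cut locus of `p`: points `γ t₀`, `t₀ ∈ (0,1)`, on a nontrivial local geodesic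
`γ` issuing in `p` such that `γ` is minimizing on `[0,t₀]` but on no larger interval `[0,t]`. -/
def MinCut (p : X) : Set X :=
  {q | ∃ (γ : C(I01, X)) (L : ℝ) (t₀ : ℝ) (ht₀ : t₀ ∈ Set.Ioo (0 : ℝ) 1),
      IsLocGeod γ L ∧ 0 < L ∧ γ pt0 = p ∧ γ ⟨t₀, Set.mem_Icc_of_Ioo ht₀⟩ = q ∧
      dist p q = L * t₀ ∧
      ∀ t : ℝ, ∀ ht : t ∈ Set.Ioc t₀ 1,
        dist p (γ ⟨t, ⟨(ht₀.1.trans ht.1).le, ht.2⟩⟩) ≠ L * t}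

/-- The minimal radius of `p`, an element of `[0,∞]` (`∞` if `MinCut p = ∅`). -/
def minRad (p : X) : ℝ≥0∞ := ⨅ q ∈ MinCut p, edist p q

/-- The space `X̃_p` of local geodesics issuing in `p` (including the constant map), viewed
as a subset of the continuous maps `C([0,1], X)` whose metric is the uniform metric `ρ`. -/
def LocGeodFrom (p : X) : Set C(I01, X) := {γ | (∃ L, IsLocGeod γ L) ∧ γ pt0 = p}

/-- The endpoint map `exp_p : X̃_p → X`, `γ ↦ γ 1`. -/
def endpt : C(I01, X) → X := fun γ => γ pt1

/-- `γ 1` is conjugate to `p = γ 0` along the local geodesic `γ`: no neighborhood `U` of `γ`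
in `X̃_p` is mapped homeomorphically onto its image by the endpoint map. -/
def ConjugateAlong (p : X) (γ : C(I01, X)) : Prop :=
  γ ∈ LocGeodFrom p ∧
    ¬ ∃ U : Set C(I01, X), U ⊆ LocGeodFrom p ∧ U ∈ 𝓝[LocGeodFrom p] γ ∧
      Topology.IsEmbedding (U.restrict endpt)

/-- The conjugate radius of `p`: the infimum of lengths of local geodesics issuing in `p`
along which the endpoint is conjugate to `p` (`∞` if there are none). -/
def conjRad (p : X) : ℝ≥0∞ :=
  sInf {l | ∃ (γ : C(I01, X)) (L : ℝ), IsLocGeod γ L ∧ γ pt0 = p ∧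
    ConjugateAlong p γ ∧ l = ENNReal.ofReal L}

/-- The conjugate radius of the space `X`. -/
def conjSpace (X : Type*) [MetricSpace X] : ℝ≥0∞ := ⨅ p : X, conjRad p

section Topology

variable {Y Z : Type*} [TopologicalSpace Y] [TopologicalSpace Z] {f : Y → Z}

lemma continuousAt_rightInverse_of_isClosedMap (hf : IsClosedMap f) {g : Z → Y}
    (hg : Function.RightInverse g f) {z : Z} (hz : ∀ y, f y = z → y = g z) :
    ContinuousAt g z := by
  refine (nhds_basis_opens (g z)).tendsto_right_iff.2 fun V ⟨hzV, hV⟩ => ?_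
  have hz' : z ∉ f '' Vᶜ := by
    rintro ⟨y, hyV, hy⟩
    exact hyV (hz y hy ▸ hzV)
  filter_upwards [(hf _ hV.isClosed_compl).isOpen_compl.mem_nhds hz'] with w hw
  by_contra hwV
  exact hw ⟨g w, hwV, hg w⟩

lemma isCompact_setOf_exists_ne_of_injOn_nhds [T2Space Z] (hf : Continuous f) {K : Set Y}
    (hK : IsCompact K) (hinj : ∀ y ∈ K, ∃ U ∈ 𝓝 y, InjOn f U) :
    IsCompact {z | ∃ a ∈ K, ∃ b ∈ K, f a = z ∧ f b = z ∧ a ≠ b} := by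
  -- Local injectivity keeps the pairs of distinct points with equal image away from the diagonal.
  let D : Set (Y × Y) := interior {x | f x.1 = f x.2 → x.1 = x.2}
  have hD : ∀ y ∈ K, (y, y) ∈ D := fun y hy => by
    obtain ⟨U, hU, hUf⟩ := hinj y hy
    exact mem_interior_iff_mem_nhds.2 <|
      mem_of_superset (prod_mem_nhds hU hU) fun x hx h => hUf hx.1 hx.2 h
  have hpairs : IsCompact ((K ×ˢ K) ∩ ({x | f x.1 = f x.2} ∩ Dᶜ)) :=
    (hK.prod hK).inter_right <|
      (isClosed_eq (by fun_prop) (by fun_prop)).inter isOpen_interior.isClosed_compl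
  convert hpairs.image (hf.comp continuous_fst) using 1
  ext z
  constructor
  · rintro ⟨a, ha, b, hb, rfl, hba, hab⟩
    exact ⟨(a, b), ⟨⟨ha, hb⟩, hba.symm, fun h => hab (interior_subset h hba.symm)⟩, rfl⟩
  · rintro ⟨⟨a, b⟩, ⟨⟨ha, hb⟩, hab, hD'⟩, rfl⟩
    exact ⟨a, ha, b, hb, rfl, hab.symm, fun h => hD' (h ▸ hD a ha)⟩

lemma exists_nhds_forall_isPreconnected_not_mapsTo [T3Space Y] (hf : IsClosedMap f) {c d : Y}
    (hcd : c ≠ d) {U : Set Y} (hU : U ∈ 𝓝 c) (hinj : InjOn f U) :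
    ∃ O ∈ 𝓝 c, ∃ V ∈ 𝓝 d, ∃ W ∈ 𝓝 (f c), ∀ C, IsPreconnected C →
      (C ∩ O).Nonempty → (C ∩ V).Nonempty → ¬ MapsTo f C W := by
  obtain ⟨N, hN, hNc, hNU⟩ := exists_mem_nhds_isClosed_subset
    (inter_mem hU (isOpen_compl_singleton.mem_nhds hcd))
  have hcN : c ∈ interior N := mem_interior_iff_mem_nhds.2 hN
  have hfc : f c ∉ f '' frontier N := by
    rintro ⟨a, ha, hac⟩
    have haN : a ∈ N := hNc.frontier_subset ha
    have : a = c := hinj (hNU haN).1 (mem_of_mem_nhds hU) hac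
    exact ha.2 (this ▸ hcN)
  -- A set whose image avoids `f '' frontier N` cannot cross `frontier N`.
  refine ⟨interior N, isOpen_interior.mem_nhds hcN, Nᶜ,
    hNc.isOpen_compl.mem_nhds fun hd => (hNU hd).2 rfl, (f '' frontier N)ᶜ,
    (hf _ isClosed_frontier).isOpen_compl.mem_nhds hfc, fun C hC hCN hCN' hCf => ?_⟩
  have hcover : C ⊆ interior N ∪ Nᶜ := fun x hx => by
    by_contra! hx'
    rw [mem_union, not_or, notMem_compl_iff] at hx'
    exact hCf hx ⟨x, ⟨subset_closure hx'.2, hx'.1⟩, rfl⟩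
  obtain ⟨x, -, hxN, hxN'⟩ := hC _ _ isOpen_interior hNc.isOpen_compl hcover hCN hCN'
  exact hxN' (interior_subset hxN)

end Topology

lemma isCompact_setOf_lipschitzWith_eq {Y Z : Type*} [PseudoMetricSpace Y] [MetricSpace Z]
    [ProperSpace Z] (K : NNReal) (y : Y) (z : Z) :
    IsCompact {f : C(Y, Z) | LipschitzWith K f ∧ f y = z} := by
  refine ArzelaAscoli.isCompact_of_equicontinuous _ ?_
    (LipschitzWith.uniformEquicontinuous _ K fun f => f.2.1).equicontinuous
  have himage : ContinuousMap.toFun '' {f : C(Y, Z) | LipschitzWith K f ∧ f y = z} =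
      {f | LipschitzWith K f} ∩ {f | f y = z} := by
    ext f
    exact ⟨by rintro ⟨f, hf, rfl⟩; exact hf, fun hf => ⟨⟨f, hf.1.continuous⟩, hf, rfl⟩⟩
  rw [himage]
  refine (isCompact_univ_pi fun x => isCompact_closedBall z (K * dist x y)).of_isClosed_subset
    ((isClosed_setOfPred_lipschitzWith K).inter (isClosed_eq (by fun_prop) continuous_const)) ?_
  rintro f ⟨hf, rfl⟩ x -
  exact hf.dist_le_mul x y

section Geodesics

variable {γ c : C(I01, X)} {L L' : ℝ}

lemma IsGeod.speed_eq (h : IsGeod c L) : L = dist (c 0) (c 1) := by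
  simp [h.2]

lemma IsGeod.dist_zero_left (h : IsGeod c L) (t : I01) : dist (c 0) (c t) = L * t := by
  simp [h.2, abs_of_nonneg t.2.1]

lemma IsGeod.dist_one_right (h : IsGeod c L) (t : I01) : dist (c t) (c 1) = L * (1 - t) := by
  rw [dist_comm, h.2, Icc.coe_one, abs_of_nonneg (sub_nonneg.2 t.2.2)]

lemma IsGeod.lipschitzWith (h : IsGeod c L) : LipschitzWith L.toNNReal c :=
  .of_dist_le_mul fun s t => by
    rw [h.2, Real.coe_toNNReal L h.1, Subtype.dist_eq, Real.dist_eq]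

lemma exists_isGeod_iff :
    (∃ L, IsGeod c L) ↔ ∀ s t : I01, dist (c s) (c t) = dist (c 0) (c 1) * |(s : ℝ) - t| :=
  ⟨fun ⟨_, h⟩ => h.speed_eq ▸ h.2, fun h => ⟨_, dist_nonneg, h⟩⟩

lemma isClosed_setOf_exists_isGeod : IsClosed {c : C(I01, X) | ∃ L, IsGeod c L} := by
  simp only [exists_isGeod_iff, ofPred_forall]
  exact isClosed_iInter fun s => isClosed_iInter fun t =>
    isClosed_eq (by fun_prop) (by fun_prop)

lemma IsGeod.isLocGeod (h : IsGeod c L) : IsLocGeod c L :=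
  ⟨h.1, fun _ => ⟨1, one_pos, fun s s' _ _ => h.2 s s'⟩⟩

lemma IsGeod.two_mul_dist_le (h : IsGeod c L) (p : X) (t : I01) :
    2 * dist p (c t) ≤ dist p (c 0) + dist p (c 1) + dist (c 0) (c 1) := by
  have h₀ := dist_triangle p (c 0) (c t)
  have h₁ := dist_triangle_right p (c t) (c 1)
  rw [h.dist_zero_left] at h₀
  rw [h.dist_one_right] at h₁
  linarith [h.speed_eq]

lemma IsLocGeod.eventually_dist_eq (h : IsLocGeod γ L) (t : I01) :
    ∀ᶠ s in 𝓝 t, dist (γ t) (γ s) = L * |(t : ℝ) - s| := by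
  obtain ⟨ε, hε, hγ⟩ := h.2 t
  filter_upwards [ball_mem_nhds t hε] with s hs
  exact hγ t s (by simpa using hε) hs

lemma IsLocGeod.speed_unique (h : IsLocGeod γ L) (h' : IsLocGeod γ L') : L = L' := by
  have : (𝓝[>] (0 : I01)).NeBot := nhdsGT_neBot_of_exists_gt ⟨1, zero_lt_one⟩
  obtain ⟨s, hs₀, hs, hs'⟩ := ((frequently_gt_nhds (0 : I01)).and_eventually
    ((h.eventually_dist_eq 0).and (h'.eventually_dist_eq 0))).exists
  have hs₀' : ((0 : I01) : ℝ) - s ≠ 0 := by simpa using hs₀.ne'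
  exact mul_right_cancel₀ (abs_ne_zero.2 hs₀') (hs.symm.trans hs')

lemma IsLocGeod.dist_le (h : IsLocGeod γ L) {s t : I01} (hst : s ≤ t) :
    dist (γ s) (γ t) ≤ L * (t - s) := by
  have hclosed : IsClosed ({u : I01 | dist (γ s) (γ u) ≤ L * (u - s)} ∩ Icc s t) :=
    (isClosed_le (by fun_prop) (by fun_prop)).inter isClosed_Icc
  refine hclosed.Icc_subset_of_forall_mem_nhdsWithin (by simp) ?_ ⟨hst, le_rfl⟩
  rintro u ⟨hu, -⟩
  filter_upwards [nhdsWithin_le_nhds (h.eventually_dist_eq u), self_mem_nhdsWithin] with v hv huv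
  have huv' : (u : ℝ) < v := huv
  rw [abs_sub_comm, abs_of_pos (sub_pos.2 huv')] at hv
  calc dist (γ s) (γ v) ≤ dist (γ s) (γ u) + dist (γ u) (γ v) := dist_triangle _ _ _
    _ ≤ L * (u - s) + L * (v - u) := add_le_add hu hv.le
    _ = L * (v - s) := by ring

lemma IsLocGeod.isGeod_of_dist_eq (h : IsLocGeod γ L) (hL : dist (γ 0) (γ 1) = L) :
    IsGeod γ L := by
  have hdist : ∀ {s t : I01}, s ≤ t → dist (γ s) (γ t) = L * (t - s) := fun {s t} hst => by
    have h₀ := h.dist_le (s := 0) s.2.1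
    have h₁ := h.dist_le (t := 1) t.2.2
    have := dist_triangle4 (γ 0) (γ s) (γ t) (γ 1)
    rw [Icc.coe_zero] at h₀
    rw [Icc.coe_one] at h₁
    exact le_antisymm (h.dist_le hst) (by linarith)
  refine ⟨h.1, fun s t => ?_⟩
  rcases le_total s t with hst | hts
  · rw [hdist hst, abs_sub_comm, abs_of_nonneg (sub_nonneg.2 (Subtype.coe_le_coe.2 hst))]
  · rw [dist_comm, hdist hts, abs_of_nonneg (sub_nonneg.2 (Subtype.coe_le_coe.2 hts))]

end Geodesics

section InitialSegment

/-- The restrictions of a path to the initial intervals `[0,t]`, each reparametrized on `[0,1]`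
and depending continuously on `t`. -/
def initialSegment (γ : C(I01, X)) : C(I01, C(I01, X)) :=
  ContinuousMap.curry ⟨fun x : I01 × I01 => γ (x.1 * x.2), by fun_prop⟩

lemma initialSegment_apply (γ : C(I01, X)) (t s : I01) : initialSegment γ t s = γ (t * s) := rfl

@[simp] lemma initialSegment_apply_zero (γ : C(I01, X)) (t : I01) :
    initialSegment γ t 0 = γ 0 := by
  rw [initialSegment_apply, mul_zero]

@[simp] lemma initialSegment_apply_one (γ : C(I01, X)) (t : I01) :
    initialSegment γ t 1 = γ t := by
  rw [initialSegment_apply, mul_one]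

@[simp] lemma initialSegment_one (γ : C(I01, X)) : initialSegment γ 1 = γ := by
  ext s
  rw [initialSegment_apply, one_mul]

lemma abs_coe_mul_sub_coe_mul (t s s' : I01) :
    |((t * s : I01) : ℝ) - (t * s' : I01)| = t * |(s : ℝ) - s'| := by
  rw [Icc.coe_mul, Icc.coe_mul, ← mul_sub, abs_mul, abs_of_nonneg t.2.1]

variable {γ : C(I01, X)} {L : ℝ}

lemma IsGeod.initialSegment (h : IsGeod γ L) (t : I01) : IsGeod (initialSegment γ t) (L * t) :=
  ⟨mul_nonneg h.1 t.2.1, fun s s' => by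
    rw [initialSegment_apply, initialSegment_apply, h.2, abs_coe_mul_sub_coe_mul, mul_assoc]⟩

lemma IsLocGeod.initialSegment (h : IsLocGeod γ L) (t : I01) :
    IsLocGeod (initialSegment γ t) (L * t) := by
  refine ⟨mul_nonneg h.1 t.2.1, fun u => ?_⟩
  obtain ⟨ε, hε, hγ⟩ := h.2 (t * u)
  have hclose : ∀ s : I01, |(s : ℝ) - u| < ε → |((t * s : I01) : ℝ) - (t * u : I01)| < ε :=
    fun s hs => (abs_coe_mul_sub_coe_mul t s u).trans_lt
      ((mul_le_of_le_one_left (abs_nonneg _) t.2.2).trans_lt hs)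
  refine ⟨ε, hε, fun s s' hs hs' => ?_⟩
  rw [initialSegment_apply, initialSegment_apply, hγ _ _ (hclose s hs) (hclose s' hs'),
    abs_coe_mul_sub_coe_mul, mul_assoc]

end InitialSegment

section Concatenation

open unitInterval (symm coe_symm_eq)

variable {x y z : X} {α : Path x y} {β : Path y z} {L : ℝ}

lemma IsGeod.path_symm (h : IsGeod α.toContinuousMap L) : IsGeod α.symm.toContinuousMap L := by
  refine ⟨h.1, fun s t => ?_⟩
  have := h.2 (symm s) (symm t)
  rwa [coe_symm_eq, coe_symm_eq, sub_sub_sub_cancel_left, abs_sub_comm] at this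

lemma IsGeod.dist_eq_of_le_dist_symm (hα : IsGeod α.toContinuousMap L)
    (hβ : IsGeod β.toContinuousMap L) {s : I01} (hs : 2 * L * s ≤ dist (α (symm s)) (β s))
    {a b : I01} (ha : 1 - (s : ℝ) ≤ a) (hb : b ≤ s) :
    dist (α a) (β b) = L * (1 - a + b) := by
  have hay : dist (α a) y = L * (1 - a) := by simpa using hα.dist_one_right a
  have hyb : dist y (β b) = L * b := by simpa using hβ.dist_zero_left b
  have hsa : dist (α (symm s)) (α a) = L * (a - (1 - s)) := by
    rw [← α.coe_toContinuousMap, hα.2, coe_symm_eq, abs_sub_comm,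
      abs_of_nonneg (sub_nonneg.2 ha)]
  have hbs : dist (β b) (β s) = L * (s - b) := by
    rw [← β.coe_toContinuousMap, hβ.2, abs_sub_comm,
      abs_of_nonneg (sub_nonneg.2 (Subtype.coe_le_coe.2 hb))]
  have hupper := dist_triangle (α a) y (β b)
  have hlower := dist_triangle4 (α (symm s)) (α a) (β b) (β s)
  exact le_antisymm (by linarith) (by linarith)

lemma IsGeod.dist_trans_of_le_half (hα : IsGeod α.toContinuousMap L) {s t : I01}
    (hs : (s : ℝ) ≤ 1 / 2) (ht : (t : ℝ) ≤ 1 / 2) :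
    dist ((α.trans β) s) ((α.trans β) t) = 2 * L * |(s : ℝ) - t| := by
  rw [Path.trans_apply, Path.trans_apply, dif_pos hs, dif_pos ht, ← α.coe_toContinuousMap, hα.2,
    ← mul_sub, abs_mul, abs_two]
  ring

lemma IsGeod.dist_trans_of_half_lt (hβ : IsGeod β.toContinuousMap L) {s t : I01}
    (hs : 1 / 2 < (s : ℝ)) (ht : 1 / 2 < (t : ℝ)) :
    dist ((α.trans β) s) ((α.trans β) t) = 2 * L * |(s : ℝ) - t| := by
  rw [Path.trans_apply, Path.trans_apply, dif_neg hs.not_ge, dif_neg ht.not_ge,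
    ← β.coe_toContinuousMap, hβ.2, sub_sub_sub_cancel_right, ← mul_sub, abs_mul, abs_two]
  ring

lemma IsGeod.isLocGeod_trans (hα : IsGeod α.toContinuousMap L) (hβ : IsGeod β.toContinuousMap L)
    {s : I01} (hs₀ : 0 < s) (hs : 2 * L * s ≤ dist (α (symm s)) (β s)) :
    IsLocGeod (α.trans β).toContinuousMap (2 * L) := by
  have hs₀' : 0 < (s : ℝ) := hs₀
  have hmixed : ∀ {t t' : I01}, (t : ℝ) ≤ 1 / 2 → 1 / 2 < (t' : ℝ) →
      |(t : ℝ) - 1 / 2| < s / 2 → |(t' : ℝ) - 1 / 2| < s / 2 →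
      dist ((α.trans β) t) ((α.trans β) t') = 2 * L * |(t : ℝ) - t'| := by
    intro t t' ht ht' hts hts'
    rw [abs_lt] at hts hts'
    rw [Path.trans_apply, Path.trans_apply, dif_pos ht, dif_neg ht'.not_ge,
      hα.dist_eq_of_le_dist_symm hβ hs (by dsimp only; linarith)
        (Subtype.coe_le_coe.1 (by dsimp only; linarith)),
      abs_sub_comm, abs_of_pos (by linarith)]
    ring
  refine ⟨mul_nonneg zero_le_two hα.1, fun t => ?_⟩
  rcases lt_trichotomy (t : ℝ) (1 / 2) with ht | ht | ht
  · refine ⟨1 / 2 - t, sub_pos.2 ht, fun a b ha hb => hα.dist_trans_of_le_half ?_ ?_⟩ <;>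
      linarith [le_abs_self ((a : ℝ) - t), le_abs_self ((b : ℝ) - t)]
  · refine ⟨s / 2, half_pos hs₀', fun a b ha hb => ?_⟩
    rw [ht] at ha hb
    rcases le_or_gt (a : ℝ) (1 / 2) with ha' | ha' <;>
      rcases le_or_gt (b : ℝ) (1 / 2) with hb' | hb'
    · exact hα.dist_trans_of_le_half ha' hb'
    · exact hmixed ha' hb' ha hb
    · rw [dist_comm, abs_sub_comm]
      exact hmixed hb' ha' hb ha
    · exact hβ.dist_trans_of_half_lt ha' hb'
  · refine ⟨t - 1 / 2, sub_pos.2 ht, fun a b ha hb => hβ.dist_trans_of_half_lt ?_ ?_⟩ <;>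
      linarith [neg_abs_le ((a : ℝ) - t), neg_abs_le ((b : ℝ) - t)]

lemma mem_minCut_of_isLocGeod_trans_symm {α β : Path x y} (hL : 0 < L)
    (hα : IsGeod α.toContinuousMap L) (hβ : IsGeod β.toContinuousMap L)
    (h : IsLocGeod (α.trans β.symm).toContinuousMap (2 * L)) : y ∈ MinCut x := by
  have hxy : dist x y = L := by simpa using hα.speed_eq.symm
  refine ⟨_, 2 * L, 1 / 2, by norm_num, h, by positivity, (α.trans β.symm).source, ?_,
    by rw [hxy]; ring, fun t ht => ?_⟩
  · rw [Path.coe_toContinuousMap, Path.trans_apply, dif_pos le_rfl]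
    simp
  · rw [Path.coe_toContinuousMap, Path.trans_apply, dif_neg (not_le.2 ht.1)]
    have hdist : ∀ u, dist x (β.symm u) = L * (1 - u) := fun u => by
      simpa using hβ.dist_zero_left (symm u)
    have ht₀ : 1 / 2 < t := ht.1
    exact (hdist _).trans_ne (by dsimp only; nlinarith)

end Concatenation

section MinimizingExponential

/-- The minimizing geodesics issuing in `p`, a subset of `LocGeodFrom p`. -/
def GeodFrom (p : X) : Set C(I01, X) := {c | (∃ L, IsGeod c L) ∧ c 0 = p}

/-- The restriction of the exponential map `endpt` at `p` to the minimizing geodesics. -/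
abbrev minExp (p : X) (c : GeodFrom p) : X := c.1 1

variable {p q : X}

lemma isGeod_of_mem_geodFrom {c : C(I01, X)} (hc : c ∈ GeodFrom p) :
    IsGeod c (dist p (c 1)) := by
  obtain ⟨⟨L, hL⟩, rfl⟩ := hc
  exact hL.speed_eq ▸ hL

lemma geodFrom_subset_locGeodFrom (p : X) : GeodFrom p ⊆ LocGeodFrom p :=
  fun _ ⟨⟨L, hL⟩, h₀⟩ => ⟨⟨L, hL.isLocGeod⟩, h₀⟩

/-- `initialSegment` as an operation on the minimizing geodesics issuing in `p`. -/
def geodSegment (c : GeodFrom p) (t : I01) : GeodFrom p :=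
  ⟨initialSegment c.1 t, ⟨_, (isGeod_of_mem_geodFrom c.2).initialSegment t⟩, by simpa using c.2.2⟩

lemma tendsto_geodSegment (c : GeodFrom p) : Tendsto (geodSegment c) (𝓝 1) (𝓝 c) :=
  tendsto_subtype_rng.2 (by simpa [geodSegment] using (initialSegment c.1).continuous.tendsto 1)

@[simp] lemma minExp_geodSegment (c : GeodFrom p) (t : I01) : minExp p (geodSegment c t) = c.1 t :=
  initialSegment_apply_one c.1 t

lemma continuous_minExp (p : X) : Continuous (minExp p) := by
  fun_prop

lemma surjective_minExp (hgeo : GeodesicSpace X) (p : X) : Function.Surjective (minExp p) :=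
  fun q => by
    obtain ⟨c, L, hc, h₀, h₁⟩ := hgeo p q
    exact ⟨⟨c, ⟨L, hc⟩, h₀⟩, h₁⟩

lemma mem_cut_iff : q ∈ Cut p ↔ ∃ a b : GeodFrom p, minExp p a = q ∧ minExp p b = q ∧ a ≠ b := by
  constructor
  · rintro ⟨a, b, La, Lb, ha, hb, ha₀, ha₁, hb₀, hb₁, hab⟩
    exact ⟨⟨a, ⟨La, ha⟩, ha₀⟩, ⟨b, ⟨Lb, hb⟩, hb₀⟩, ha₁, hb₁, fun h => hab (congrArg Subtype.val h)⟩
  · rintro ⟨⟨a, ⟨La, ha⟩, ha₀⟩, ⟨b, ⟨Lb, hb⟩, hb₀⟩, ha₁, hb₁, hab⟩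
    exact ⟨a, b, La, Lb, ha, hb, ha₀, ha₁, hb₀, hb₁, fun h => hab (Subtype.ext h)⟩

lemma eq_of_minExp_eq_of_notMem_cut (hq : q ∉ Cut p) {a b : GeodFrom p} (ha : minExp p a = q)
    (hb : minExp p b = q) : a = b := by
  by_contra hab
  exact hq (mem_cut_iff.2 ⟨a, b, ha, hb, hab⟩)

lemma self_notMem_cut (p : X) : p ∉ Cut p := by
  have hconst : ∀ c : GeodFrom p, minExp p c = p → ∀ t, c.1 t = p := fun c hc t => by
    have h := (isGeod_of_mem_geodFrom c.2).dist_zero_left t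
    rw [show c.1 1 = p from hc, dist_self, zero_mul, dist_eq_zero] at h
    exact h.symm.trans c.2.2
  rw [mem_cut_iff]
  rintro ⟨a, b, ha, hb, hab⟩
  exact hab (Subtype.ext (ContinuousMap.ext fun t => by rw [hconst a ha, hconst b hb]))

lemma isProperMap_minExp [ProperSpace X] (p : X) : IsProperMap (minExp p) := by
  refine isProperMap_iff_isCompact_preimage.2 ⟨continuous_minExp p, fun K hK => ?_⟩
  obtain ⟨R, hR⟩ := hK.isBounded.subset_closedBall p
  have hclosed : IsClosed (GeodFrom p ∩ {c | c 1 ∈ K}) :=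
    (isClosed_setOf_exists_isGeod.inter (isClosed_eq (by fun_prop) continuous_const)).inter
      (hK.isClosed.preimage (by fun_prop))
  rw [Subtype.isCompact_iff]
  have himage : Subtype.val '' (minExp p ⁻¹' K) = GeodFrom p ∩ {c | c 1 ∈ K} :=
    Subtype.image_preimage_coe _ {c : C(I01, X) | c 1 ∈ K}
  rw [himage]
  refine (isCompact_setOf_lipschitzWith_eq R.toNNReal 0 p).of_isClosed_subset hclosed ?_
  rintro c ⟨hc, hcK⟩
  refine ⟨(isGeod_of_mem_geodFrom hc).lipschitzWith.weaken (Real.toNNReal_mono ?_), hc.2⟩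
  exact dist_comm p (c 1) ▸ hR hcK

lemma continuousAt_rightInverse_minExp [ProperSpace X] {τ : X → GeodFrom p}
    (hτ : Function.RightInverse τ (minExp p)) (hq : q ∉ Cut p) : ContinuousAt τ q :=
  continuousAt_rightInverse_of_isClosedMap (isProperMap_minExp p).isClosedMap hτ
    fun _ hc => eq_of_minExp_eq_of_notMem_cut hq hc (hτ q)

lemma isPreconnected_preimage_minExp [ProperSpace X] (hgeo : GeodesicSpace X) {S : Set X}
    (hS : IsPreconnected S) (hcut : Disjoint S (Cut p)) : IsPreconnected (minExp p ⁻¹' S) := by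
  obtain ⟨τ, hτ⟩ := (surjective_minExp hgeo p).hasRightInverse
  have hpreimage : minExp p ⁻¹' S = τ '' S := by
    ext c
    refine ⟨fun hc => ⟨minExp p c, hc, ?_⟩, ?_⟩
    · exact eq_of_minExp_eq_of_notMem_cut (disjoint_left.1 hcut hc) (hτ _) rfl
    · rintro ⟨q, hq, rfl⟩
      rwa [mem_preimage, hτ q]
  rw [hpreimage]
  exact hS.image τ fun q hq =>
    (continuousAt_rightInverse_minExp hτ (disjoint_left.1 hcut hq)).continuousWithinAt

end MinimizingExponential

section ConjugateRadius

variable {p q : X}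

lemma exists_nhds_injOn_endpt {γ : C(I01, X)} {L : ℝ} (h : IsLocGeod γ L) (h₀ : γ 0 = p)
    (hL : ENNReal.ofReal L < conjRad p) : ∃ U ∈ 𝓝 γ, InjOn endpt (U ∩ LocGeodFrom p) := by
  have hconj : ¬ ConjugateAlong p γ := fun hc => hL.not_ge (sInf_le ⟨γ, L, h, h₀, hc, rfl⟩)
  obtain ⟨V, -, hV, hemb⟩ := not_not.1 fun hV => hconj ⟨⟨⟨L, h⟩, h₀⟩, hV⟩
  obtain ⟨U, hU, hUV⟩ := mem_nhdsWithin_iff_exists_mem_nhds_inter.1 hV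
  exact ⟨U, hU, (injOn_iff_injective.2 hemb.injective).mono hUV⟩

lemma exists_nhds_injOn_minExp (c : GeodFrom p) (hc : edist p (minExp p c) < conjRad p) :
    ∃ U ∈ 𝓝 c, InjOn (minExp p) U := by
  obtain ⟨U, hU, hinj⟩ := exists_nhds_injOn_endpt (isGeod_of_mem_geodFrom c.2).isLocGeod c.2.2
    (edist_dist p (minExp p c) ▸ hc)
  refine ⟨Subtype.val ⁻¹' U, continuousAt_subtype_val hU, fun a ha b hb hab => ?_⟩
  exact Subtype.ext (hinj ⟨ha, geodFrom_subset_locGeodFrom p a.2⟩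
    ⟨hb, geodFrom_subset_locGeodFrom p b.2⟩ hab)

lemma isCompact_cut_inter_closedBall [ProperSpace X] {R : ℝ}
    (hR : ENNReal.ofReal R < conjRad p) : IsCompact (Cut p ∩ closedBall p R) := by
  have hinj : ∀ c ∈ minExp p ⁻¹' closedBall p R, ∃ U ∈ 𝓝 c, InjOn (minExp p) U := fun c hc =>
    exists_nhds_injOn_minExp c <| hR.trans_le' <| by
      rw [edist_dist, dist_comm]
      exact ENNReal.ofReal_le_ofReal hc
  convert isCompact_setOf_exists_ne_of_injOn_nhds (continuous_minExp p)
    ((isProperMap_minExp p).isCompact_preimage (isCompact_closedBall p R)) hinj using 1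
  ext q
  rw [mem_inter_iff, mem_cut_iff]
  constructor
  · rintro ⟨⟨a, b, rfl, hb, hab⟩, hq⟩
    exact ⟨a, hq, b, by rwa [mem_preimage, hb], rfl, hb, hab⟩
  · rintro ⟨a, ha, b, -, rfl, hb, hab⟩
    exact ⟨⟨a, b, rfl, hb, hab⟩, ha⟩

lemma exists_mem_cut_edist_eq_inj [ProperSpace X] (h : inj p < conjRad p) :
    ∃ q ∈ Cut p, edist p q = inj p := by
  obtain ⟨R, hR, hRconj⟩ := ENNReal.lt_iff_exists_nnreal_btwn.1 h
  have hball : ∀ {q}, edist p q ≤ R ↔ q ∈ closedBall p R := by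
    intro q
    rw [edist_comm, edist_le_coe, mem_closedBall, ← coe_nndist, NNReal.coe_le_coe]
  obtain ⟨q₀, hq₀, hq₀R⟩ : ∃ q ∈ Cut p, edist p q < R := by
    simpa only [inj, iInf_lt_iff, exists_prop] using hR
  obtain ⟨q, hq, hmin⟩ := (isCompact_cut_inter_closedBall (by simpa using hRconj)).exists_isMinOn
    ⟨q₀, hq₀, hball.1 hq₀R.le⟩ (f := fun q => edist p q) (by fun_prop)
  refine ⟨q, hq.1, le_antisymm (le_iInf₂ fun q' hq' => ?_) (iInf₂_le q hq.1)⟩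
  rcases le_total (edist p q') R with hq'R | hq'R
  · exact hmin ⟨hq', hball.1 hq'R⟩
  · exact (hball.2 hq.2).trans hq'R

end ConjugateRadius

section MinimalCutLocus

variable {p q : X}

lemma IsGeod.disjoint_range_cut {e : C(I01, X)} {L : ℝ} (he : IsGeod e L)
    (h : ENNReal.ofReal ((dist p (e 0) + dist p (e 1) + dist (e 0) (e 1)) / 2) < inj p) :
    Disjoint (range e) (Cut p) := by
  rw [disjoint_left]
  rintro _ ⟨t, rfl⟩ ht
  refine h.not_ge ((iInf₂_le (e t) ht).trans ?_)
  rw [edist_dist]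
  exact ENNReal.ofReal_le_ofReal (by linarith [he.two_mul_dist_le p t])

lemma mem_minCut_of_two_mul_le_dist {c d : GeodFrom p} (hpq : p ≠ q) (hc : minExp p c = q)
    (hd : minExp p d = q) {t : I01} (ht : t < 1)
    (hcd : 2 * dist p q * (1 - t) ≤ dist (c.1 t) (d.1 t)) : q ∈ MinCut p := by
  let α : Path p q := ⟨c.1, c.2.2, hc⟩
  let β : Path p q := ⟨d.1, d.2.2, hd⟩
  have hα : IsGeod α.toContinuousMap (dist p q) := by
    simpa only [hc] using isGeod_of_mem_geodFrom c.2
  have hβ : IsGeod β.toContinuousMap (dist p q) := by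
    simpa only [hd] using isGeod_of_mem_geodFrom d.2
  refine mem_minCut_of_isLocGeod_trans_symm (dist_pos.2 hpq) hα hβ
    (hα.isLocGeod_trans hβ.path_symm (s := unitInterval.symm t) ?_ ?_)
  · exact sub_pos.2 (Subtype.coe_lt_coe.2 ht)
  · simpa [α, β] using hcd

variable [ProperSpace X]

lemma mem_cut_or_conjRad_le_edist_of_mem_minCut (hgeo : GeodesicSpace X) (hq : q ∈ MinCut p) :
    q ∈ Cut p ∨ conjRad p ≤ edist p q := by
  obtain ⟨γ, L, t₀, ht₀, hγ, -, hγ₀, rfl, hdist, hnot⟩ := hq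
  by_contra! ⟨hcut, hconj⟩
  set T : I01 := ⟨t₀, Set.mem_Icc_of_Ioo ht₀⟩
  have hγ₀' : γ 0 = p := hγ₀
  have hseg := hγ.initialSegment
  have hsegT : initialSegment γ T ∈ GeodFrom p :=
    ⟨⟨_, (hseg T).isGeod_of_dist_eq (by simpa [hγ₀'] using hdist)⟩, by simpa using hγ₀'⟩
  obtain ⟨τ, hτ⟩ := (surjective_minExp hgeo p).hasRightInverse
  have hτT : (τ (γ T)).1 = initialSegment γ T := congrArg Subtype.val <|
    eq_of_minExp_eq_of_notMem_cut (b := ⟨_, hsegT⟩) hcut (hτ _) (initialSegment_apply_one γ T)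
  obtain ⟨U, hU, hinj⟩ := exists_nhds_injOn_endpt (hseg T) hsegT.2
    (by rwa [← hdist, ← edist_dist])
  have hτU : ∀ᶠ t in 𝓝 T, (τ (γ t)).1 ∈ U := by
    have hcont : Tendsto (fun t => (τ (γ t)).1) (𝓝 T) (𝓝 (τ (γ T)).1) :=
      continuousAt_subtype_val.comp <|
        (continuousAt_rightInverse_minExp hτ hcut).comp γ.continuous.continuousAt
    exact hcont (by rwa [hτT])
  have hsegU : ∀ᶠ t in 𝓝 T, initialSegment γ t ∈ U := (initialSegment γ).continuous.continuousAt hU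
  have : (𝓝[>] T).NeBot := nhdsGT_neBot_of_exists_gt ⟨1, ht₀.2⟩
  obtain ⟨t, hTt, htτ, htseg⟩ :=
    ((frequently_gt_nhds T).and_eventually (hτU.and hsegU)).exists
  have hendpt : (τ (γ t)).1 1 = γ t := hτ (γ t)
  have hτt : (τ (γ t)).1 = initialSegment γ t :=
    hinj ⟨htτ, geodFrom_subset_locGeodFrom p (τ _).2⟩
      ⟨htseg, ⟨_, hseg t⟩, (initialSegment_apply_zero γ t).trans hγ₀⟩
      (hendpt.trans (initialSegment_apply_one γ t).symm)
  have hgeod := isGeod_of_mem_geodFrom (τ (γ t)).2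
  rw [hendpt, hτt] at hgeod
  exact hnot t ⟨hTt, t.2.2⟩ (hgeod.isLocGeod.speed_unique (hseg t))

lemma exists_isPreconnected_mapsTo_closedBall (hgeo : GeodesicSpace X) {a b : GeodFrom p}
    (h : ENNReal.ofReal ((dist p (minExp p a) + dist p (minExp p b) +
      dist (minExp p a) (minExp p b)) / 2) < inj p) (q : X) :
    ∃ S, IsPreconnected S ∧ a ∈ S ∧ b ∈ S ∧ MapsTo (minExp p) S (closedBall q
      ((dist q (minExp p a) + dist q (minExp p b) + dist (minExp p a) (minExp p b)) / 2)) := by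
  obtain ⟨e, L, he, he₀, he₁⟩ := hgeo (minExp p a) (minExp p b)
  rw [← he₀, ← he₁] at h ⊢
  refine ⟨minExp p ⁻¹' range e, isPreconnected_preimage_minExp hgeo
    (isPreconnected_range e.continuous) (he.disjoint_range_cut h), ⟨0, he₀⟩, ⟨1, he₁⟩, ?_⟩
  rintro x ⟨t, ht⟩
  rw [← ht, mem_closedBall, dist_comm, le_div_iff₀' two_pos]
  exact he.two_mul_dist_le q t

lemma exists_isPreconnected_geodSegment_mapsTo_ball (hgeo : GeodesicSpace X) {c d : GeodFrom p}
    (hc : minExp p c = q) (hd : minExp p d = q) (hpq : p ≠ q) (hinj : edist p q ≤ inj p) {t : I01}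
    (hcd : dist (c.1 t) (d.1 t) < 2 * dist p q * (1 - t)) :
    ∃ S, IsPreconnected S ∧ geodSegment c t ∈ S ∧ geodSegment d t ∈ S ∧
      MapsTo (minExp p) S (ball q (2 * dist p q * (1 - t))) := by
  have hdist : ∀ {a : GeodFrom p}, minExp p a = q →
      dist p (a.1 t) = dist p q * t ∧ dist q (a.1 t) = dist p q * (1 - t) := fun {a} ha => by
    subst ha
    have h := isGeod_of_mem_geodFrom a.2
    exact ⟨by simpa only [a.2.2] using h.dist_zero_left t,
      by simpa only [dist_comm] using h.dist_one_right t⟩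
  obtain ⟨hpc, hqc⟩ := hdist hc
  obtain ⟨hpd, hqd⟩ := hdist hd
  obtain ⟨S, hS, hcS, hdS, hmaps⟩ := exists_isPreconnected_mapsTo_closedBall hgeo
    (a := geodSegment c t) (b := geodSegment d t) (hinj.trans_lt' <| by
      rw [minExp_geodSegment, minExp_geodSegment, hpc, hpd, edist_dist]
      exact (ENNReal.ofReal_lt_ofReal_iff (dist_pos.2 hpq)).2 (by linarith)) q
  refine ⟨S, hS, hcS, hdS, hmaps.mono_right (closedBall_subset_ball ?_)⟩
  rw [minExp_geodSegment, minExp_geodSegment, hqc, hqd]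
  linarith

lemma mem_minCut_of_mem_cut (hgeo : GeodesicSpace X) (hq : q ∈ Cut p) (hinj : edist p q ≤ inj p)
    (hconj : edist p q < conjRad p) : q ∈ MinCut p := by
  by_contra hmin
  have hpq : p ≠ q := fun h => self_notMem_cut p (by rwa [← h] at hq)
  obtain ⟨c, d, rfl, hd, hcd⟩ := mem_cut_iff.1 hq
  obtain ⟨U, hU, hUinj⟩ := exists_nhds_injOn_minExp c hconj
  obtain ⟨O, hO, V, hV, W, hW, hsep⟩ := exists_nhds_forall_isPreconnected_not_mapsTo
    (isProperMap_minExp p).isClosedMap hcd hU hUinj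
  obtain ⟨ε, hε, hball⟩ := Metric.mem_nhds_iff.1 hW
  have hsmall : ∀ᶠ t : I01 in 𝓝 1, 2 * dist p (minExp p c) * (1 - t) < ε :=
    ContinuousAt.eventually_lt (by fun_prop) continuousAt_const (by simpa using hε)
  have : (𝓝[<] (1 : I01)).NeBot := nhdsLT_neBot_of_exists_lt ⟨0, zero_lt_one⟩
  obtain ⟨t, ht, htO, htV, htε⟩ := ((frequently_lt_nhds (1 : I01)).and_eventually <|
    (tendsto_geodSegment c |>.eventually hO).and <|
      (tendsto_geodSegment d |>.eventually hV).and hsmall).exists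
  have hclose : dist (c.1 t) (d.1 t) < 2 * dist p (minExp p c) * (1 - t) := by
    by_contra! h
    exact hmin (mem_minCut_of_two_mul_le_dist hpq rfl hd ht h)
  obtain ⟨S, hS, hcS, hdS, hmaps⟩ :=
    exists_isPreconnected_geodSegment_mapsTo_ball hgeo rfl hd hpq hinj hclose
  exact hsep S hS ⟨_, hcS, htO⟩ ⟨_, hdS, htV⟩
    (hmaps.mono_right ((ball_subset_ball htε.le).trans hball))

lemma inj_le_minRad (hgeo : GeodesicSpace X) (h : inj p ≤ conjRad p) : inj p ≤ minRad p :=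
  le_iInf₂ fun q hq => (mem_cut_or_conjRad_le_edist_of_mem_minCut hgeo hq).elim
    (iInf₂_le q) h.trans

lemma minRad_le_inj (hgeo : GeodesicSpace X) (h : inj p < conjRad p) : minRad p ≤ inj p := by
  obtain ⟨q, hq, hqinj⟩ := exists_mem_cut_edist_eq_inj h
  exact hqinj ▸ iInf₂_le q (mem_minCut_of_mem_cut hgeo hq hqinj.le (hqinj ▸ h))

end MinimalCutLocus

theorem inj_eq_minRad_general [ProperSpace X] (hgeo : GeodesicSpace X) (p : X)
    (h : inj p < conjRad p) : inj p = minRad p :=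
  le_antisymm (inj_le_minRad hgeo h.le) (minRad_le_inj hgeo h)

/-- In a proper geodesic metric space, if `0 < inj p < conj X`, then
`inj p = MinRad p`. -/
theorem inj_eq_minRad {X : Type*} [MetricSpace X] [ProperSpace X]
    (hgeo : GeodesicSpace X) (p : X)
    (h0 : 0 < inj p) (h1 : inj p < conjSpace X) :
    inj p = minRad p :=
  inj_eq_minRad_general hgeo p (h1.trans_le (iInf_le _ p))

end InjSoul
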